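/- arXiv:0903.4601 — 2 statements merged into one kernel-verified Lean document; each statement's English description precedes it below -/
import Mathlib

section
/- Non-Commutative Cycle Lemma: Let w be a word of length n in the letters u_1^{±1}, ..., u_N^{±1} whose cyclic reduction has length k ≥ 1. Then exactly k of the n cyclic permutations of w have good reduction. -/
/-!
The number of good rotations of a word is unchanged by a cyclic reduction step, and every
rotation of a cyclically reduced word `v` is good, which gives `v.length` of them.

The number of good rotations depends only on the word up to rotation, so a reduction step may be
taken to be `x x⁻¹ m → m` (`goodCount_cons_cons`). The rotation `x x⁻¹ m` is bad. Writing `m = q p`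
with `p` nonempty, the rotation `p x x⁻¹ q` is good iff `p q` is good and `p ≠ x⁻¹` in the free
group (`good_insert`). So the step loses exactly those good rotations `p q` of `m` for which
`p = x⁻¹` in the free group. There is at most one of these, since two would differ by a prefix
equal to `1`. There is one iff the remaining rotation `x⁻¹ m x` is good (`good_conj` and
`exists_of_good_conj`), so the counts agree.

Both directions of the last claim rest on the tree structure of the free group. If no nonempty
prefix of a word is trivial, then its reduced form keeps the first letter (`reduce_cons_of_np`).
A word whose reduced form is a concatenation splits accordingly (`FreeGroup.Red.to_append_iff`).
-/

namespace NCC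

/-- A letter `u_i^{±1}`: a generator index together with a sign. -/
abbrev Letter (N : ℕ) := Fin N × Bool

/-- The inverse of a letter. -/
def linv {N : ℕ} (l : Letter N) : Letter N := (l.1, !l.2)

/-- One cyclic reduction step: either a linear reduction step (removal of two
adjacent letters which are inverses of each other), or removal of the first and
last letters when they are inverses of each other. -/
def CyclicStep {N : ℕ} (w w' : List (Letter N)) : Prop :=
  FreeGroup.Red.Step w w' ∨
    ∃ (l : Letter N) (m : List (Letter N)), w = l :: (m ++ [linv l]) ∧ w' = m

/-- `w` reduces cyclically (in zero or more steps) to `v`. -/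
def CycReducesTo {N : ℕ} (w v : List (Letter N)) : Prop :=
  Relation.ReflTransGen CyclicStep w v

/-- A word is linearly reduced when no two adjacent letters are inverses of
each other. -/
def LinReduced {N : ℕ} (w : List (Letter N)) : Prop :=
  List.Chain' (fun a b => b ≠ linv a) w

/-- A word is cyclically reduced iff `w ++ w` is linearly reduced, i.e. it is
linearly reduced and its last letter is not the inverse of its first letter. -/
def CycReduced {N : ℕ} (w : List (Letter N)) : Prop :=
  LinReduced (w ++ w)

/-- A word is reducible to 1 if it linearly reduces to the empty word. -/
def ReducibleToOne {N : ℕ} (w : List (Letter N)) : Prop :=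
  FreeGroup.Red w []

/-- A word has good reduction: no nonempty prefix is reducible to 1, and its
linear reduction is cyclically reduced. -/
def GoodReduction {N : ℕ} (w : List (Letter N)) : Prop :=
  (∀ s, s <+: w → s ≠ [] → ¬ ReducibleToOne s) ∧
    CycReduced (FreeGroup.reduce w)

/-- The first `i` letters of the infinite word `w_∞ = w w w ⋯`. -/
def infTake {N : ℕ} (w : List (Letter N)) (i : ℕ) : List (Letter N) :=
  ((List.replicate i w).flatten).take i

section Aux

variable {N : ℕ}

open FreeGroup

/-! ### Letters, reduced words and prefixes -/

lemma linv_linv (x : Letter N) : linv (linv x) = x := by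
  simp [linv]

lemma mk_mul_mk_linv (x : Letter N) : mk [x] * mk [linv x] = 1 := by
  rw [mul_mk, one_eq_mk]
  exact Quot.sound (Red.Step.cons_not (L := []))

lemma mk_linv (x : Letter N) : mk [linv x] = (mk [x])⁻¹ :=
  eq_inv_of_mul_eq_one_right (mk_mul_mk_linv x)

lemma mk_letter_ne_one (x : Letter N) : mk [x] ≠ 1 := by
  intro h
  have := congrArg toWord h
  simp [toWord_mk] at this

lemma reducibleToOne_iff (s : List (Letter N)) : ReducibleToOne s ↔ mk s = 1 := by
  constructor
  · intro h
    have := reduce.exact (reduce.eq_of_red h)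
    rwa [← one_eq_mk] at this
  · intro h
    have h2 : reduce s = [] := by rw [← toWord_mk, h, toWord_one]
    have := reduce.red (L := s)
    rwa [h2] at this

lemma linReduced_iff (r : List (Letter N)) : LinReduced r ↔ IsReduced r := by
  have : (fun a b : Letter N => b ≠ linv a) = fun a b => a.1 = b.1 → a.2 = b.2 := by
    funext ⟨a, s⟩ ⟨b, t⟩
    cases s <;> cases t <;> simp [linv, eq_comm]
  unfold LinReduced FreeGroup.IsReduced
  rw [← this]
  exact Iff.rfl

/-- No nonempty prefix of `w` is trivial in the free group. -/
def NP (w : List (Letter N)) : Prop :=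
  ∀ s t, w = s ++ t → s ≠ [] → mk s ≠ 1

lemma good_iff (w : List (Letter N)) :
    GoodReduction w ↔ NP w ∧ CycReduced (mk w).toWord := by
  unfold GoodReduction NP
  rw [toWord_mk]
  refine and_congr_left' ⟨fun h s t hw hs => ?_, fun h s hs hne => ?_⟩
  · rw [Ne, ← reducibleToOne_iff]
    exact h s ⟨t, hw.symm⟩ hs
  · obtain ⟨t, rfl⟩ := hs
    rw [reducibleToOne_iff]
    exact h s t rfl hne

lemma reduce_cons_of_np {a : Letter N} {t : List (Letter N)} (h : NP (a :: t)) :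
    ∃ r, reduce (a :: t) = a :: r := by
  rw [reduce.cons]
  rcases hr : reduce t with _ | ⟨b, l⟩
  · exact ⟨[], rfl⟩
  · dsimp only
    split_ifs with hc
    · exfalso
      have hb : b = linv a := by
        obtain ⟨b1, b2⟩ := b
        obtain ⟨a1, a2⟩ := a
        simp only at hc
        simp [linv, hc.1, hc.2]
      have hred : Red t ([b] ++ l) := by
        have := reduce.red (L := t)
        rwa [hr] at this
      obtain ⟨L3, L4, rfl, h3, -⟩ := Red.to_append_iff.1 hred
      refine h (a :: L3) L4 rfl (by simp) ?_
      have h4 : mk L3 = mk [b] := reduce.exact (reduce.eq_of_red h3)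
      rw [← List.singleton_append, ← mul_mk, h4, hb, mk_mul_mk_linv]
    · exact ⟨b :: l, rfl⟩

/-! ### Rotations of `x x⁻¹ m` compared with rotations of `m` -/

lemma good_insert (x : Letter N) {p : List (Letter N)} (hp : p ≠ []) (q : List (Letter N)) :
    GoodReduction (p ++ x :: linv x :: q) ↔ GoodReduction (p ++ q) ∧ mk p ≠ mk [linv x] := by
  have hmk : ∀ q : List (Letter N), mk (p ++ x :: linv x :: q) = mk (p ++ q) := fun q => by
    rw [show p ++ x :: linv x :: q = p ++ ([x] ++ ([linv x] ++ q)) by simp,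
      ← mul_mk, ← mul_mk, ← mul_mk, ← mul_mk, mk_linv]
    group
  rw [good_iff, good_iff, hmk]
  constructor
  · rintro ⟨h, hc⟩
    refine ⟨⟨fun s t hst hs => ?_, hc⟩, fun hpx => ?_⟩
    · rcases List.append_eq_append_iff.1 hst with ⟨u, rfl, rfl⟩ | ⟨u, rfl, rfl⟩
      · rw [← hmk]
        exact h _ t (by simp) (by simp)
      · exact h s (u ++ x :: linv x :: q) (by simp) hs
    · refine h (p ++ [x]) (linv x :: q) (by simp) (by simp) ?_
      rw [← mul_mk, hpx, mk_linv]
      group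
  · rintro ⟨⟨h, hc⟩, hpx⟩
    refine ⟨fun s t hst hs => ?_, hc⟩
    rcases List.append_eq_append_iff.1 hst with ⟨u, rfl, hu⟩ | ⟨u, rfl, hu⟩
    · rcases u with _ | ⟨y, _ | ⟨z, u⟩⟩
      · simpa using h p q rfl hp
      · simp only [List.cons_append, List.nil_append, List.cons.injEq] at hu
        intro h1
        apply hpx
        rw [← mul_mk, ← hu.1] at h1
        rw [mk_linv]
        exact eq_inv_of_mul_eq_one_left h1
      · simp only [List.cons_append, List.cons.injEq] at hu
        obtain ⟨rfl, rfl, rfl⟩ := hu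
        rw [hmk]
        exact h _ t (by simp) (by simp [hp])
    · exact h s (u ++ q) (by simp) hs

/-- A nontrivial element whose reduced form is cyclically reduced does not start with the same
letter as its inverse. -/
lemma not_cycReduced_of_inv {g : FreeGroup (Fin N)} {a : Letter N} {r r' : List (Letter N)}
    (h : g.toWord = a :: r) (h' : g⁻¹.toWord = a :: r') : ¬ CycReduced g.toWord := by
  intro hc
  have h2 : g.toWord = invRev r' ++ [linv a] := by
    have := toWord_inv g⁻¹
    rw [inv_inv, h'] at this
    rw [this, invRev_cons]
    rfl
  have h3 : LinReduced (g.toWord ++ g.toWord) := hc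
  nth_rewrite 1 [h2] at h3
  rw [h, linReduced_iff] at h3
  have h4 : IsReduced [linv a, a] := h3.infix ⟨invRev r', r, by simp⟩
  rw [isReduced_cons_cons] at h4
  simp [linv] at h4

lemma good_conj {x : Letter N} {p q : List (Letter N)} (hp : p ≠ [])
    (hpx : mk p = mk [linv x]) (h : GoodReduction (p ++ q)) :
    GoodReduction (linv x :: (q ++ p) ++ [x]) := by
  rw [good_iff] at h ⊢
  obtain ⟨hn, hc⟩ := h
  have hg : mk (linv x :: (q ++ p) ++ [x]) = mk (p ++ q) := by
    rw [show linv x :: (q ++ p) ++ [x] = [linv x] ++ (q ++ (p ++ [x])) by simp]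
    rw [← mul_mk, ← mul_mk, ← mul_mk, ← mul_mk, hpx, mk_linv]
    group
  have hcons : ∀ s, mk (linv x :: s) = mk (p ++ s) := fun s => by
    rw [← List.singleton_append, ← mul_mk, ← mul_mk, hpx]
  rw [hg]
  refine ⟨fun s t hst hs => ?_, hc⟩
  rcases s with _ | ⟨y, s⟩
  · simp at hs
  simp only [List.cons_append, List.cons.injEq] at hst
  obtain ⟨rfl, hst⟩ := hst
  rw [hcons]
  rw [List.append_assoc] at hst
  rcases List.append_eq_append_iff.1 hst with ⟨u, rfl, hu⟩ | ⟨u, rfl, hu⟩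
  · rcases List.append_eq_append_iff.1 hu with ⟨z, rfl, hz⟩ | ⟨z, rfl, hz⟩
    · rcases z with _ | ⟨b, z⟩
      -- the prefix `x⁻¹ q p`: if trivial, `p = g⁻¹` where `g = p q`; `p` and `p q` start alike
      · intro h1
        have h5 : mk (p ++ q) * mk p = 1 := by
          rw [mul_mk]; simpa using h1
        obtain ⟨a, p', rfl⟩ := List.exists_cons_of_ne_nil hp
        obtain ⟨r, hr⟩ := reduce_cons_of_np (a := a) (t := p' ++ q) hn
        obtain ⟨r', hr'⟩ := reduce_cons_of_np (a := a) (t := p')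
          (fun s t hst hs => hn s (t ++ q) (by rw [hst]; simp) hs)
        refine not_cycReduced_of_inv (g := mk (a :: p' ++ q)) (r := r) (r' := r') hr ?_ hc
        rw [inv_eq_of_mul_eq_one_right h5, toWord_mk, hr']
      · have : z = [] ∧ b = x ∧ t = [] := by
          have := congrArg List.length hz
          rcases z with _ | _
          · simp_all
          · simp at this
        obtain ⟨rfl, rfl, rfl⟩ := this
        have h6 := hcons (q ++ (p ++ [b]))
        rw [← h6]
        have h7 : linv b :: (q ++ (p ++ [b])) = linv b :: (q ++ p) ++ [b] := by simp
        rw [h7, hg]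
        exact hn _ [] (by simp) (by simp [hp])
    · rcases u with _ | ⟨a, u⟩
      · rw [List.append_nil]
        exact hn _ [] (by simp) (fun h0 => hp (List.append_eq_nil_iff.1 h0).1)
      -- the prefix `x⁻¹ q p'` with `p'` a nonempty prefix of `p`: same reason
      · intro h1
        have h5 : mk ((a :: u ++ z) ++ q) * mk (a :: u) = 1 := by
          rw [mul_mk]; simpa using h1
        obtain ⟨r, hr⟩ := reduce_cons_of_np (a := a) (t := u ++ z ++ q) hn
        obtain ⟨r', hr'⟩ := reduce_cons_of_np (a := a) (t := u)
          (fun s t hst hs => hn s (t ++ z ++ q) (by rw [hst]; simp) hs)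
        refine not_cycReduced_of_inv (g := mk (a :: u ++ z ++ q)) (r := r) (r' := r') hr ?_ hc
        rw [inv_eq_of_mul_eq_one_right h5, toWord_mk, hr']
  · exact hn _ u (by simp) (by simp [hp])

/-- A suffix equal to `x⁻¹` can be shortened until none of its nonempty prefixes is trivial. -/
lemma exists_minimal_suffix (x : Letter N) (n : ℕ) : ∀ (q p : List (Letter N)), p.length ≤ n →
    mk p = mk [linv x] → ∃ q' p', q ++ p = q' ++ p' ∧ mk p' = mk [linv x] ∧ NP p' := by
  induction n with
  | zero =>
    intro q p hp hpx
    have : p = [] := List.length_eq_zero_iff.1 (by omega)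
    subst this
    exact absurd (hpx.symm.trans one_eq_mk.symm) (mk_letter_ne_one _)
  | succ n ih =>
    intro q p hp hpx
    by_cases h : NP p
    · exact ⟨q, p, rfl, hpx, h⟩
    · unfold NP at h
      push Not at h
      obtain ⟨s, t, rfl, hs, h1⟩ := h
      have hs' := List.length_pos_iff.2 hs
      obtain ⟨q', p', h2, h3⟩ := ih (q ++ s) t (by simp at hp; omega)
        (by rw [← hpx, ← mul_mk, h1, one_mul])
      exact ⟨q', p', by rw [← h2]; simp, h3⟩

lemma exists_of_good_conj {x : Letter N} {m : List (Letter N)}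
    (h : GoodReduction (linv x :: m ++ [x])) :
    ∃ q p, m = q ++ p ∧ p ≠ [] ∧ mk p = mk [linv x] ∧ GoodReduction (p ++ q) := by
  rw [good_iff] at h
  obtain ⟨hn, hc⟩ := h
  obtain ⟨r, hr⟩ := reduce_cons_of_np (a := linv x) (t := m ++ [x]) hn
  set g := mk (linv x :: m ++ [x]) with hgdef
  have hgw : g.toWord = linv x :: r := hr
  -- `g x⁻¹` is reduced as written, because `g` starts with `x⁻¹` and is cyclically reduced
  have hred : IsReduced (g.toWord ++ [linv x]) := by
    have h3 : LinReduced (g.toWord ++ g.toWord) := hc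
    rw [linReduced_iff] at h3
    exact h3.infix ⟨[], r, by rw [hgw]; simp⟩
  have hgx : mk (linv x :: m) = mk (g.toWord ++ [linv x]) := by
    rw [← mul_mk, mk_toWord, hgdef, ← mul_mk, mk_linv]
    group
  have hR : Red (linv x :: m) (g.toWord ++ [linv x]) := by
    have := reduce.red (L := linv x :: m)
    rwa [reduce.sound hgx, hred.reduce_eq] at this
  obtain ⟨L3, L4, h34, h3, h4⟩ := Red.to_append_iff.1 hR
  have h4' : mk L4 = mk [linv x] := reduce.exact (reduce.eq_of_red h4)
  have hL3 : ∃ q, L3 = linv x :: q := by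
    rcases L3 with _ | ⟨y, q⟩
    · rw [Red.nil_iff, hgw] at h3
      simp at h3
    · simp only [List.cons_append, List.cons.injEq] at h34
      exact ⟨q, by rw [h34.1]⟩
  obtain ⟨q₀, rfl⟩ := hL3
  simp only [List.cons_append, List.cons.injEq, true_and] at h34
  obtain ⟨q, p, hqp, hp, hnp⟩ := exists_minimal_suffix x L4.length q₀ L4 le_rfl h4'
  have hm : m = q ++ p := h34.trans hqp
  have hp0 : p ≠ [] := by
    rintro rfl
    exact mk_letter_ne_one _ (hp.symm.trans one_eq_mk.symm)
  refine ⟨q, p, hm, hp0, hp, ?_⟩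
  rw [good_iff]
  constructor
  · intro s t hst hs
    rcases List.append_eq_append_iff.1 hst with ⟨u, rfl, hu⟩ | ⟨u, rfl, hu⟩
    · have := hn (linv x :: u) (t ++ p ++ [x]) (by rw [hm, hu]; simp) (by simp)
      rwa [← mul_mk, hp, mul_mk, List.singleton_append]
    · exact hnp s u rfl hs
  · have : mk (p ++ q) = g := by
      rw [hgdef, hm, show linv x :: (q ++ p) ++ [x] = [linv x] ++ (q ++ (p ++ [x])) by simp]
      rw [← mul_mk, ← mul_mk, ← mul_mk, ← mul_mk, hp, mk_linv]
      group
    rwa [this]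

/-! ### Counting good rotations -/

open scoped Classical in
/-- The number of indices `i < w.length` for which the rotation of `w` by `i` is good. -/
noncomputable def goodCount (w : List (Letter N)) : ℕ :=
  Nat.count (fun i => GoodReduction (w.rotate i)) w.length

lemma goodCount_rotate_one (w : List (Letter N)) : goodCount (w.rotate 1) = goodCount w := by
  classical
  unfold goodCount
  have h1 := Nat.count_succ' (fun i => GoodReduction (w.rotate i)) w.length
  have h2 := Nat.count_succ (fun i => GoodReduction (w.rotate i)) w.length
  have h3 : (fun i => GoodReduction ((w.rotate 1).rotate i)) =
      fun i => GoodReduction (w.rotate (i + 1)) := by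
    funext i
    rw [List.rotate_rotate, add_comm]
  rw [List.length_rotate]
  simp only [List.rotate_length, List.rotate_zero] at h1 h2
  simp only [h3]
  omega

lemma goodCount_congr {w w' : List (Letter N)} (h : w ~r w') : goodCount w = goodCount w' := by
  obtain ⟨n, rfl⟩ := h
  induction n with
  | zero => simp
  | succ n ih => rw [ih, ← List.rotate_rotate, goodCount_rotate_one]

lemma goodCount_cons_cons (x : Letter N) (m : List (Letter N)) :
    goodCount (x :: linv x :: m) = goodCount m := by
  classical
  unfold goodCount
  rw [show (x :: linv x :: m).length = m.length + 1 + 1 from rfl, Nat.count_succ', Nat.count_succ']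
  have h0 : ¬ GoodReduction ((x :: linv x :: m).rotate 0) := by
    rw [good_iff]
    rintro ⟨h, -⟩
    refine h [x, linv x] m (by simp) (by simp) ?_
    rw [← mk_mul_mk_linv x, mul_mk]
    rfl
  have h1 : (x :: linv x :: m).rotate (0 + 1) = linv x :: m ++ [x] := by simp
  rw [if_neg h0, h1]
  have hrot : ∀ i < m.length, m.rotate i = m.drop i ++ m.take i := fun i hi =>
    List.rotate_eq_drop_append_take hi.le
  have h2 : ∀ i < m.length, (GoodReduction ((x :: linv x :: m).rotate (i + 1 + 1)) ↔
      GoodReduction (m.rotate i) ∧ mk (m.drop i) ≠ mk [linv x]) := by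
    intro i hi
    rw [hrot i hi, List.rotate_eq_drop_append_take (by simp; omega)]
    simp only [List.drop_succ_cons, List.take_succ_cons]
    exact good_insert x (by simpa using hi) _
  -- the good rotations of `m` that are lost
  have h3 : ((Finset.range m.length).filter (fun i => GoodReduction (m.rotate i) ∧
      ¬ mk (m.drop i) ≠ mk [linv x])).card =
      if GoodReduction (linv x :: m ++ [x]) then 1 else 0 := by
    split_ifs with hg
    · obtain ⟨q, p, rfl, hp, hpx, hpq⟩ := exists_of_good_conj hg
      have hp' := List.length_pos_iff.2 hp
      rw [Finset.card_eq_one]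
      refine ⟨q.length, Finset.eq_singleton_iff_unique_mem.2 ⟨?_, ?_⟩⟩
      · simp [hp', hpx, hpq, List.rotate_append_length_eq]
      · -- two such positions differ by a nonempty trivial prefix
        have key : ∀ i j, i < j → j < (q ++ p).length → GoodReduction ((q ++ p).rotate i) →
            mk ((q ++ p).drop i) = mk [linv x] → mk ((q ++ p).drop j) = mk [linv x] → False := by
          intro i j hij hj hgi hi' hj'
          rw [hrot i (hij.trans hj), good_iff] at hgi
          have hsplit : (q ++ p).drop i =
              ((q ++ p).drop i).take (j - i) ++ (q ++ p).drop j := by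
            conv_lhs => rw [← List.take_append_drop (j - i) ((q ++ p).drop i)]
            rw [List.drop_drop, Nat.add_sub_cancel' hij.le]
          refine hgi.1 (((q ++ p).drop i).take (j - i)) ((q ++ p).drop j ++ (q ++ p).take i)
            ?_ ?_ ?_
          · rw [← List.append_assoc, ← hsplit]
          · intro h
            have := congrArg List.length h
            simp only [List.length_take, List.length_drop, List.length_nil] at this
            omega
          · rw [hsplit, ← mul_mk, hj'] at hi'
            exact mul_eq_right.1 hi'
        intro i hi
        simp only [Finset.mem_filter, Finset.mem_range, not_not] at hi
        have hql : q.length < (q ++ p).length := by simp [hp']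
        rcases lt_trichotomy i q.length with h | h | h
        · exact (key i q.length h hql hi.2.1 hi.2.2 (by simpa using hpx)).elim
        · exact h
        · exact (key q.length i h hi.1 (by simpa [List.rotate_append_length_eq] using hpq)
            (by simpa using hpx) hi.2.2).elim
    · rw [Finset.card_eq_zero, Finset.filter_eq_empty_iff]
      rintro i hi ⟨hgi, hx⟩
      rw [Finset.mem_range] at hi
      rw [hrot i hi] at hgi
      have := good_conj (x := x) (by simpa using hi) (not_not.1 hx) hgi
      rw [List.take_append_drop] at this
      exact hg this
  rw [Nat.count_eq_card_filter_range, Nat.count_eq_card_filter_range, ← h3, add_zero]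
  rw [Finset.filter_congr (fun i hi => h2 i (Finset.mem_range.1 hi)), ← Finset.filter_filter,
    ← Finset.filter_filter, Finset.card_filter_add_card_filter_not]

lemma goodCount_step {w w' : List (Letter N)} (h : CyclicStep w w') :
    goodCount w = goodCount w' := by
  rcases h with h | ⟨l, m, rfl, hm⟩
  · rcases h with @⟨L₁, L₂, a, b⟩
    have e1 : L₁ ++ (a, b) :: (a, !b) :: L₂ ~r (a, b) :: linv (a, b) :: (L₂ ++ L₁) :=
      List.isRotated_append
    rw [goodCount_congr e1, goodCount_cons_cons]
    exact goodCount_congr List.isRotated_append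
  · subst hm
    have e1 : l :: (w' ++ [linv l]) ~r linv l :: linv (linv l) :: w' := by
      rw [linv_linv]
      exact List.isRotated_append (l := l :: w') (l' := [linv l])
    rw [goodCount_congr e1, goodCount_cons_cons]

lemma goodCount_of_cycReduced {v : List (Letter N)} (h : CycReduced v) :
    goodCount v = v.length := by
  classical
  unfold goodCount
  rw [Nat.count_iff_forall]
  intro i hi
  rw [List.rotate_eq_drop_append_take hi.le]
  set p := v.drop i with hp
  set q := v.take i with hq
  have hv : v = q ++ p := (List.take_append_drop i v).symm
  have hp0 : p ≠ [] := by simpa [hp] using hi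
  have h1 : IsReduced (v ++ v) := (linReduced_iff _).1 h
  rw [hv] at h1
  have hpq : IsReduced (p ++ q) := h1.infix ⟨q, p, by simp⟩
  have hpp : IsReduced (p ++ q ++ p) := h1.infix ⟨q, [], by simp⟩
  rw [good_iff, toWord_mk, hpq.reduce_eq]
  refine ⟨fun s t hst hs h1 => hs ?_, ?_⟩
  · have hsr : IsReduced s := hpq.infix ⟨[], t, by simp [hst]⟩
    rw [← hsr.reduce_eq, ← toWord_mk, h1, toWord_one]
  · change LinReduced _
    rw [linReduced_iff, ← List.append_assoc]
    exact IsReduced.append_overlap hpp hpq hp0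

end Aux

open scoped Classical in
/-- **The Non-Commutative Cycle Lemma.** If `w` is a word whose cyclic
reduction has length `k ≥ 1`, then exactly `k` of the cyclic permutations
`w.rotate i`, `0 ≤ i < n`, of `w` have good reduction. -/
theorem noncommutative_cycle_lemma (N k : ℕ) (hk : 1 ≤ k)
    (w v : List (Letter N)) (hred : CycReducesTo w v) (hvc : CycReduced v)
    (hvk : v.length = k) :
    ((Finset.range w.length).filter (fun i => GoodReduction (w.rotate i))).card = k := by
  rw [← Nat.count_eq_card_filter_range]
  change goodCount w = k
  have h : goodCount w = goodCount v := by
    clear hvc hvk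
    induction hred with
    | refl => rfl
    | tail _ hs ih => rw [ih, goodCount_step hs]
  rw [h, goodCount_of_cycReduced hvc, hvk]

end NCC
end

section
/- Let w be a word of length n in the letters u_1^{±1}, ..., u_N^{±1} which reduces cyclically to a word of length k > 0, and let w_∞ = www⋯ be the infinite word obtained by repeating w. If s is a prefix of w_∞ whose number of letters exceeds n(1 + n/k), then the length of the linear reduction of the concatenation ws equals k plus the length of the linear reduction of s, i.e. |ws| = k + |s|. -/
/-!
Write `reduce w = c ++ u ++ invRev c` with `u` cyclically reduced, so that `w = c u c⁻¹` in the
free group and every word `c ++ u ++ ⋯ ++ u ++ invRev c` is reduced.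

The length of `u` is `k`. Indeed `u` and `v` are both cyclically reduced and conjugate in the free
group; the `m`-th power of a cyclically reduced word of length `ℓ` has norm `m ℓ`, and conjugation
by a fixed element changes norms by a bounded amount, so the two lengths agree
(`length_eq_of_conj`).

Put `q = i / n` and `r = i % n`; then `s = w ^ q p` with `p` the prefix of `w` of length `r`, and
the bound on `i` gives `r < n < q k`. In the product of the reduced words `c u ^ q` and
`B = toWord (c⁻¹ p)`, fewer than `q k` letters cancel: otherwise `B` would start with `u ^ (-q)`,
the product `p = c B` would involve no cancellation, and `p` would have norm at least `q k > r`.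
Hence a nonempty part of `u ^ q` survives, and replacing `u ^ q` by `u ^ (q + 1)` simply inserts
one more copy of `u`, that is `k` letters, in the reduced word
(`norm_conj_pow_succ_mul`).
-/

namespace NCC

/-! ### Cancellation and conjugation in free groups -/

section FreeGroupLemmas

open FreeGroup

variable {α : Type*}

/-- In a product of two reduced words, all cancellation takes place between a suffix `C` of the
first and the prefix `C⁻¹` of the second. -/
lemma exists_cancellation (A : List (α × Bool)) :
    ∀ B : List (α × Bool), IsReduced A → IsReduced B →
      ∃ A₁ C B₁, A = A₁ ++ C ∧ B = invRev C ++ B₁ ∧ IsReduced (A₁ ++ B₁) := by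
  induction A using List.reverseRecOn with
  | nil => exact fun B _ hB => ⟨[], [], B, by simp, by simp, by simpa using hB⟩
  | append_singleton A a ih =>
    intro B hA hB
    cases B with
    | nil => exact ⟨A ++ [a], [], [], by simp, by simp, by simpa using hA⟩
    | cons b B =>
      by_cases hab : a.1 = b.1 → a.2 = b.2
      · refine ⟨A ++ [a], [], b :: B, by simp, by simp, ?_⟩
        have h : IsReduced ([a] ++ b :: B) := by
          simpa using ⟨hab, hB⟩
        exact hA.append_overlap h (by simp)
      · obtain ⟨A₁, C, B₁, h₁, h₂, h₃⟩ := ih B (hA.infix ⟨[], [a], by simp⟩)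
          (hB.infix ⟨[b], [], by simp⟩)
        refine ⟨A₁, C ++ [a], B₁, by simp [h₁], ?_, h₃⟩
        obtain ⟨a1, a2⟩ := a
        obtain ⟨b1, b2⟩ := b
        simp only [Classical.not_imp] at hab
        obtain ⟨rfl, hne⟩ := hab
        have : b2 = !a2 := by cases a2 <;> cases b2 <;> simp_all
        simp [h₂, this, invRev]

lemma mk_flatten_replicate (L : List (α × Bool)) (m : ℕ) :
    mk (List.replicate m L).flatten = mk L ^ m := by
  induction m with
  | zero => rfl
  | succ m ih => rw [List.replicate_succ, List.flatten_cons, ← mul_mk, ih, pow_succ']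

variable [DecidableEq α]

lemma isReduced_invRev {L : List (α × Bool)} (h : IsReduced L) : IsReduced (invRev L) := by
  rw [isReduced_iff_reduce_eq, reduce_invRev, h.reduce_eq]

lemma norm_mk_of_isReduced {L : List (α × Bool)} (h : IsReduced L) : norm (mk L) = L.length := by
  rw [FreeGroup.norm, toWord_mk, h.reduce_eq]

lemma norm_pow_of_isCyclicallyReduced {u : List (α × Bool)} (h : IsCyclicallyReduced u) (m : ℕ) :
    norm (mk u ^ m) = m * u.length := by
  rw [← mk_flatten_replicate, norm_mk_of_isReduced (h.flatten_replicate m).isReduced]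
  simp

/-- One inequality of `length_eq_of_conj`: otherwise the norms of the `m`-th powers would drift
apart at least linearly in `m`, exceeding the bound `2 |g|`. -/
lemma length_le_of_conj {u v : List (α × Bool)} (hu : IsCyclicallyReduced u)
    (hv : IsCyclicallyReduced v) (g : FreeGroup α) (h : mk u = g * mk v * g⁻¹) :
    u.length ≤ v.length := by
  by_contra! hlt
  have key : ∀ m : ℕ, m * u.length ≤ m * v.length + 2 * norm g := fun m => by
    rw [← norm_pow_of_isCyclicallyReduced hu, ← norm_pow_of_isCyclicallyReduced hv, h, conj_pow]
    have h₁ := norm_mul_le (g * mk v ^ m) g⁻¹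
    have h₂ := norm_mul_le g (mk v ^ m)
    rw [norm_inv_eq] at h₁
    omega
  have := key (2 * norm g + 1)
  nlinarith

/-- Conjugate cyclically reduced words have the same length. -/
lemma length_eq_of_conj {u v : List (α × Bool)} (hu : IsCyclicallyReduced u)
    (hv : IsCyclicallyReduced v) (g : FreeGroup α) (h : mk u = g * mk v * g⁻¹) :
    u.length = v.length :=
  le_antisymm (length_le_of_conj hu hv g h)
    (length_le_of_conj hv hu g⁻¹ (by rw [h]; group))

/-- If `c ++ u ++ invRev c` is reduced with `u` cyclically reduced, and `P` has smaller norm than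
`u ^ q`, then one more factor `c u c⁻¹` in front of `(c u c⁻¹) ^ q P` adds exactly `|u|` letters. -/
lemma norm_conj_pow_succ_mul {c u : List (α × Bool)} (hu : IsCyclicallyReduced u)
    (hcu : IsReduced (c ++ u ++ invRev c)) (P : FreeGroup α) (q : ℕ)
    (hq : norm P < q * u.length) :
    norm ((mk c * mk u * (mk c)⁻¹) ^ (q + 1) * P) =
      u.length + norm ((mk c * mk u * (mk c)⁻¹) ^ q * P) := by
  have hq0 : q ≠ 0 := by rintro rfl; simp at hq
  set U := (List.replicate q u).flatten with hU
  have hUlen : U.length = q * u.length := by simp [hU]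
  have hcU : IsReduced (c ++ U ++ invRev c) := IsReduced.append_flatten_replicate_append hu hcu hq0
  have hcU' : IsReduced (c ++ U) := hcU.infix ⟨[], invRev c, by simp⟩
  have hcUinv : IsReduced (c ++ invRev U) := by
    have h := isReduced_invRev hcU
    simp only [invRev_append, invRev_invRev] at h
    exact h.infix ⟨[], invRev c, by simp⟩
  have hcuU : IsReduced (c ++ (u ++ U)) := by
    have h := IsReduced.append_flatten_replicate_append hu hcu (Nat.succ_ne_zero q)
    rw [Nat.succ_eq_add_one, List.replicate_succ, List.flatten_cons] at h
    exact h.infix ⟨[], invRev c, by simp [hU]⟩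
  set B := ((mk c)⁻¹ * P).toWord with hB
  have hBmk : mk B = (mk c)⁻¹ * P := mk_toWord
  obtain ⟨A₁, C, B₁, hA, hBC, hAB⟩ := exists_cancellation (c ++ U) B hcU' isReduced_toWord
  have hBred : IsReduced B := isReduced_toWord
  -- The cancelled suffix `C` is strictly shorter than `U`.
  have hC : C.length < U.length := by
    by_contra! hle
    obtain ⟨D, hD⟩ : U <:+ C :=
      List.suffix_of_suffix_length_le ⟨c, rfl⟩ ⟨A₁, hA.symm⟩ hle
    have hBU : B = invRev U ++ (invRev D ++ B₁) := by
      rw [hBC, ← hD, invRev_append, List.append_assoc]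
    have hne : invRev U ≠ [] := by
      intro h0
      have := congrArg List.length h0
      simp only [invRev_length, List.length_nil] at this
      omega
    have hred : IsReduced (c ++ B) := by
      rw [hBU, ← List.append_assoc]
      exact hcUinv.append_overlap (hBU ▸ hBred) hne
    have hP : P = mk (c ++ B) := by rw [← mul_mk, hBmk]; group
    rw [hP, norm_mk_of_isReduced hred, hBU] at hq
    simp only [List.length_append, invRev_length] at hq
    omega
  obtain ⟨E, hE⟩ : C <:+ U :=
    List.suffix_of_suffix_length_le ⟨A₁, hA.symm⟩ ⟨c, rfl⟩ hC.le
  have hE0 : E ≠ [] := by rintro rfl; simp [← hE] at hC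
  have hA₁ : A₁ = c ++ E := by
    rw [← hE, ← List.append_assoc] at hA
    exact (List.append_cancel_right hA).symm
  have hEB : IsReduced (E ++ B₁) := hAB.infix ⟨c, [], by simp [hA₁]⟩
  have hbig : IsReduced (c ++ u ++ E ++ B₁) :=
    IsReduced.append_overlap (hcuU.infix ⟨[], C, by simp [← hE]⟩) hEB hE0
  have hUmk : mk u ^ q = mk E * mk C := by rw [← mk_flatten_replicate, ← hU, ← hE, mul_mk]
  have hBmk' : (mk c)⁻¹ * P = (mk C)⁻¹ * mk B₁ := by rw [← hBmk, hBC, ← mul_mk, inv_mk]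
  have e₁ : (mk c * mk u * (mk c)⁻¹) ^ q * P = mk (A₁ ++ B₁) := by
    rw [conj_pow, hUmk, mul_assoc, hBmk', hA₁]
    simp only [← mul_mk]
    group
  have e₂ : (mk c * mk u * (mk c)⁻¹) ^ (q + 1) * P = mk (c ++ u ++ E ++ B₁) := by
    rw [conj_pow, pow_succ', hUmk, mul_assoc, hBmk']
    simp only [← mul_mk]
    group
  rw [e₁, e₂, norm_mk_of_isReduced hAB, norm_mk_of_isReduced hbig, hA₁]
  simp only [List.length_append]
  omega

end FreeGroupLemmas

/-! ### Cyclic reduction and prefixes of the infinite word -/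

lemma isReduced_of_linReduced {N : ℕ} {w : List (Letter N)} (h : LinReduced w) :
    FreeGroup.IsReduced w := by
  refine List.IsChain.imp (fun a b hab h1 => ?_) h
  by_contra h2
  apply hab
  obtain ⟨a1, a2⟩ := a
  obtain ⟨b1, b2⟩ := b
  simp only [linv, Prod.mk.injEq] at *
  refine ⟨h1.symm, ?_⟩
  cases a2 <;> cases b2 <;> simp_all

lemma isCyclicallyReduced_of_cycReduced {N : ℕ} {w : List (Letter N)} (h : CycReduced w) :
    FreeGroup.IsCyclicallyReduced w := by
  have h' : FreeGroup.IsReduced (w ++ w) := isReduced_of_linReduced h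
  exact ⟨h'.infix ⟨[], w, by simp⟩, (List.isChain_append.1 h').2.2⟩

lemma exists_conj_of_cycReducesTo {N : ℕ} {w v : List (Letter N)} (h : CycReducesTo w v) :
    ∃ g : FreeGroup (Fin N), FreeGroup.mk w = g * FreeGroup.mk v * g⁻¹ := by
  induction h with
  | refl => exact ⟨1, by simp⟩
  | tail _ hstep ih =>
    obtain ⟨g, hg⟩ := ih
    rcases hstep with hs | ⟨l, m, rfl, rfl⟩
    · exact ⟨g, by rw [hg, FreeGroup.Red.exact.2 ⟨_, hs.to_red, .refl⟩]⟩
    · refine ⟨g * FreeGroup.mk [l], ?_⟩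
      have : FreeGroup.mk [linv l] = (FreeGroup.mk [l])⁻¹ := by
        simp [FreeGroup.inv_mk, FreeGroup.invRev, linv]
      rw [hg, ← List.singleton_append, ← FreeGroup.mul_mk, ← FreeGroup.mul_mk, this]
      group

/-- A prefix of `w_∞` consists of whole copies of `w` followed by a prefix of `w`. -/
lemma infTake_eq {N : ℕ} (w : List (Letter N)) (hw : 0 < w.length) (i : ℕ) :
    infTake w i = (List.replicate (i / w.length) w).flatten ++ w.take (i % w.length) := by
  have hdm := Nat.div_add_mod' i w.length
  have hmod := Nat.mod_lt i hw
  set q := i / w.length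
  set r := i % w.length
  rcases Nat.eq_zero_or_pos i with rfl | hi
  · have : r = 0 := by omega
    have hq : q = 0 := by
      by_contra h
      have := Nat.mul_pos (Nat.pos_of_ne_zero h) hw
      omega
    simp [infTake, this, hq]
  · rcases Nat.lt_or_ge q i with hlt | hge
    · obtain ⟨d, hd⟩ : ∃ d, i = q + (d + 1) := ⟨i - q - 1, by omega⟩
      have : List.replicate i w = List.replicate q w ++ w :: List.replicate d w := by
        rw [← List.replicate_succ, List.replicate_append_replicate, ← hd]
      rw [infTake, this, List.flatten_append, List.flatten_cons, List.take_append]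
      have hl : (List.replicate q w).flatten.length = q * w.length := by simp
      rw [List.take_of_length_le (by omega), hl, show i - q * w.length = r by omega,
        List.take_append_of_le_length hmod.le]
    -- `q ≥ i` forces `q = i`, `r = 0` (and `w` to be a single letter).
    · have h1 : q ≤ q * w.length := Nat.le_mul_of_pos_right q hw
      have hr : r = 0 := by omega
      have hq : q = i := by omega
      have hl : (List.replicate i w).flatten.length = q * w.length := by simp [hq]
      rw [infTake, List.take_of_length_le (by omega), hr, hq]
      simp

/-- If `w` has length `n`, reduces cyclically to a word of length `k > 0`, and
`s` is a prefix of `w_∞` with more than `n(1 + n/k)` letters (i.e.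
`k·i > k·n + n²` where `i` is the number of letters of `s`), then
`|w s| = k + |s|`. -/
theorem reduce_append_prefix_of_infinite_word (N n k : ℕ) (hk : 0 < k)
    (w v : List (Letter N)) (hn : w.length = n)
    (hred : CycReducesTo w v) (hvc : CycReduced v) (hvk : v.length = k)
    (i : ℕ) (hi : k * n + n * n < k * i) :
    (FreeGroup.reduce (w ++ infTake w i)).length
      = k + (FreeGroup.reduce (infTake w i)).length := by
  have hv := isCyclicallyReduced_of_cycReduced hvc
  obtain ⟨g, hg⟩ := exists_conj_of_cycReducesTo hred
  have hRred : FreeGroup.IsReduced (FreeGroup.reduce w) := FreeGroup.isReduced_toWord (x := .mk w)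
  have hdec := FreeGroup.reduceCyclically.conj_conjugator_reduceCyclically (FreeGroup.reduce w)
  have hu := FreeGroup.reduceCyclically.isCyclicallyReduced hRred
  set u := FreeGroup.reduceCyclically (FreeGroup.reduce w)
  set c := FreeGroup.reduceCyclically.conjugator (FreeGroup.reduce w)
  have hw : FreeGroup.mk w = FreeGroup.mk c * FreeGroup.mk u * (FreeGroup.mk c)⁻¹ := by
    rw [← FreeGroup.reduce.self, ← hdec, FreeGroup.inv_mk, FreeGroup.mul_mk, FreeGroup.mul_mk]
  have huk : u.length = k := by
    rw [← hvk]
    refine length_eq_of_conj hu hv ((FreeGroup.mk c)⁻¹ * g) ?_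
    have : FreeGroup.mk u = (FreeGroup.mk c)⁻¹ * FreeGroup.mk w * FreeGroup.mk c := by
      rw [hw]; group
    rw [this, hg]; group
  have hn0 : 0 < w.length := by
    have h₁ := congrArg List.length hdec
    have h₂ : (FreeGroup.reduce w).length ≤ w.length := FreeGroup.norm_mk_le
    simp only [List.length_append] at h₁
    omega
  have hmod := Nat.mod_lt i hn0
  have hdm := Nat.div_add_mod' i w.length
  have hs := infTake_eq w hn0 i
  set q := i / w.length
  set r := i % w.length
  have hqk : n < q * k := by
    rw [hn] at hdm hmod hn0
    by_contra! hle
    have h₁ : q * k * n ≤ n * n := Nat.mul_le_mul_right n hle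
    have h₂ : k * r ≤ k * n := Nat.mul_le_mul_left k hmod.le
    rw [← hdm] at hi
    nlinarith
  have hP : FreeGroup.norm (FreeGroup.mk (w.take r)) < q * u.length := by
    have := FreeGroup.norm_mk_le (L₁ := w.take r)
    rw [List.length_take] at this
    rw [huk]
    omega
  have key := norm_conj_pow_succ_mul hu (hdec ▸ hRred) (FreeGroup.mk (w.take r)) q hP
  rw [← hw, huk, pow_succ', mul_assoc, ← mk_flatten_replicate, FreeGroup.mul_mk, ← hs,
    FreeGroup.mul_mk] at key
  simpa only [FreeGroup.norm, FreeGroup.toWord_mk] using key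

end NCC
end
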